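/- (Formal duality is inherited by symmetric powers.) Let d ≥ 0, n ≥ 1, v ∈ ℂ with v ≠ 0, and let P and P' be invertible (d+1)×(d+1) complex matrices with P' = v·P^{-1}. For a (d+1)×(d+1) matrix M, let M̂ be the matrix with rows and columns indexed by vectors α of d+1 nonnegative integers summing to n, whose (β,α)-entry is the coefficient of s^α in (Ms)^β = Π_{j=0}^{d} (Σ_{i=0}^{d} M_{j,i}·s_i)^{β(j)}. Then P̂' = v^n·(P̂)^{-1}; hence if association schemes A and B on v vertices are formally dual (the matrix of eigenvalues of B equals v times the inverse of that of A), then H(n,A) and H(n,B) are formally dual, and if A is formally self-dual then so is H(n,A). -/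

import Mathlib

open Matrix Finset MvPolynomial

/-- `M̂`: the matrix of the induced action of `M` on homogeneous polynomials of degree `n`
in `s_0, …, s_d`; its `(β,α)`-entry is the coefficient of `s^α` in `(Ms)^β`. -/
noncomputable def hatMat (d n : ℕ) (M : Matrix (Fin (d + 1)) (Fin (d + 1)) ℂ) :
    Matrix {α : Fin (d + 1) → ℕ // α ∈ Finset.Nat.antidiagonalTuple (d + 1) n}
      {α : Fin (d + 1) → ℕ // α ∈ Finset.Nat.antidiagonalTuple (d + 1) n} ℂ :=
  Matrix.of fun β α =>
    MvPolynomial.coeff (Finsupp.equivFunOnFinite.symm α.1)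
      (∏ j : Fin (d + 1),
        (∑ i : Fin (d + 1), MvPolynomial.C (M j i) * MvPolynomial.X i) ^ β.1 j)

theorem hat_row_homog (d n : ℕ) (M : Matrix (Fin (d + 1)) (Fin (d + 1)) ℂ)
    (β : Fin (d + 1) → ℕ) (hβ : β ∈ Finset.Nat.antidiagonalTuple (d + 1) n) :
    (∏ j : Fin (d + 1),
      (∑ i : Fin (d + 1), (C (M j i) * X i : MvPolynomial (Fin (d + 1)) ℂ)) ^ β j).IsHomogeneous
        n := by
  rw [Finset.Nat.mem_antidiagonalTuple] at hβ
  rw [← hβ]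
  apply MvPolynomial.IsHomogeneous.prod
  intro j _
  have h : (∑ i : Fin (d + 1), (C (M j i) * X i : MvPolynomial (Fin (d + 1)) ℂ)).IsHomogeneous
      1 := by
    apply MvPolynomial.IsHomogeneous.sum
    intro i _
    exact isHomogeneous_C_mul_X _ _
  simpa using h.pow (β j)

theorem homog_expand (d n : ℕ) (p : MvPolynomial (Fin (d + 1)) ℂ) (hp : p.IsHomogeneous n) :
    p = ∑ γ : {α : Fin (d + 1) → ℕ // α ∈ Finset.Nat.antidiagonalTuple (d + 1) n},
      C (coeff (Finsupp.equivFunOnFinite.symm γ.1) p) * ∏ j, X j ^ γ.1 j := by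
  classical
  have hm : ∀ γ : Fin (d + 1) → ℕ, (∏ j, X j ^ γ j : MvPolynomial (Fin (d + 1)) ℂ)
      = monomial (Finsupp.equivFunOnFinite.symm γ) 1 := by
    intro γ
    rw [monomial_eq, Finsupp.prod_fintype _ _ (by simp)]
    simp
  ext m
  simp only [hm, coeff_sum, coeff_C_mul, coeff_monomial]
  by_cases h : (m : Fin (d + 1) → ℕ) ∈ Finset.Nat.antidiagonalTuple (d + 1) n
  · rw [Finset.sum_eq_single ⟨m, h⟩]
    · simp
    · intro b _ hb
      rw [if_neg, mul_zero]
      intro h'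
      apply hb
      ext i
      simp [← h']
    · simp
  · rw [Finset.sum_eq_zero]
    · by_contra hne
      apply h
      rw [Finset.Nat.mem_antidiagonalTuple]
      have := hp hne
      rw [← this, Finsupp.weight_apply, Finsupp.sum_fintype _ _ (by simp)]
      simp
    · intro b _
      rw [if_neg, mul_zero]
      intro h'
      apply h
      rw [← h']
      exact b.2

theorem hatMat_mul (d n : ℕ) (M N : Matrix (Fin (d + 1)) (Fin (d + 1)) ℂ) :
    hatMat d n (M * N) = hatMat d n M * hatMat d n N := by
  ext β α
  have key := homog_expand d n _ (hat_row_homog d n M β.1 β.2)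
  have k2 := congrArg (fun p => coeff (Finsupp.equivFunOnFinite.symm α.1)
    (aeval (fun j => ∑ i : Fin (d + 1), (C (N j i) * X i : MvPolynomial (Fin (d + 1)) ℂ)) p)) key
  simp only [map_sum, map_mul, map_prod, map_pow, aeval_X, coeff_sum, algHom_C,
    algebraMap_eq, coeff_C_mul] at k2
  rw [Matrix.mul_apply]
  simp only [hatMat, Matrix.of_apply]
  rw [← k2]
  congr 1
  apply Finset.prod_congr rfl
  intro j _
  congr 1
  simp only [Matrix.mul_apply, map_sum, map_mul, Finset.sum_mul, Finset.mul_sum]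
  rw [Finset.sum_comm]
  simp only [mul_assoc]

theorem hatMat_smul_one (d n : ℕ) (v : ℂ) :
    hatMat d n (v • 1) = v ^ n • 1 := by
  classical
  ext β α
  have hβ := β.2
  rw [Finset.Nat.mem_antidiagonalTuple] at hβ
  have h : ∀ j : Fin (d + 1), (∑ i : Fin (d + 1),
      (C ((v • (1 : Matrix (Fin (d + 1)) (Fin (d + 1)) ℂ)) j i) * X i :
        MvPolynomial (Fin (d + 1)) ℂ)) = C v * X j := by
    intro j
    rw [Finset.sum_eq_single j]
    · simp
    · intro b _ hb
      simp [Matrix.one_apply_ne hb.symm]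
    · simp
  have hm : (∏ j, X j ^ β.1 j : MvPolynomial (Fin (d + 1)) ℂ)
      = monomial (Finsupp.equivFunOnFinite.symm β.1) 1 := by
    rw [monomial_eq, Finsupp.prod_fintype _ _ (by simp)]
    simp
  simp only [hatMat, Matrix.of_apply, h, mul_pow, Finset.prod_mul_distrib, hm,
    Finset.prod_pow_eq_pow_sum, hβ]
  rw [← map_pow, coeff_C_mul, coeff_monomial]
  rw [Matrix.smul_apply, smul_eq_mul, Matrix.one_apply]
  congr 1
  by_cases hab : β = α
  · rw [if_pos hab, if_pos (by rw [hab])]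
  · rw [if_neg hab, if_neg]
    intro h'
    exact hab (Subtype.ext (Finsupp.equivFunOnFinite.symm.injective h'))

/-- formal duality is inherited by symmetric powers:
if `P' = v P⁻¹` with `P` invertible and `v ≠ 0`, then `P̂' = vⁿ (P̂)⁻¹`; hence formally
dual schemes have formally dual generalized Hamming schemes, and a formally self-dual
scheme has formally self-dual `H(n,A)`. -/
theorem formal_duality_hat (d n : ℕ) (hn : 1 ≤ n) (v : ℂ) (hv : v ≠ 0)
    (P P' : Matrix (Fin (d + 1)) (Fin (d + 1)) ℂ)
    (hP : IsUnit P.det) (hP' : P' = v • P⁻¹) :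
    hatMat d n P' = v ^ n • (hatMat d n P)⁻¹ := by
  have h1 : hatMat d n P * hatMat d n P' = v ^ n • 1 := by
    rw [← hatMat_mul, hP', Matrix.mul_smul, Matrix.mul_nonsing_inv _ hP, hatMat_smul_one]
  have hvn : v ^ n ≠ 0 := pow_ne_zero _ hv
  have h2 : hatMat d n P * ((v ^ n)⁻¹ • hatMat d n P') = 1 := by
    rw [Matrix.mul_smul, h1, smul_smul, inv_mul_cancel₀ hvn, one_smul]
  rw [Matrix.inv_eq_right_inv h2, smul_smul, mul_inv_cancel₀ hvn, one_smul]
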